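/- arXiv:2604.27526 — 6 statements merged into one kernel-verified Lean document; each statement's English description precedes it below -/
import Mathlib

section
/- Let G be a group and suppose that Aut(G) acts by isometries on a geodesic Gromov-hyperbolic metric space X in such a way that the restricted action of the subgroup Inn(G) ≤ Aut(G) is non-elementary in the sense of Bestvina–Fujiwara (i.e. Inn(G) contains two independent loxodromic elements for this action). Then G has property R_∞. -/
/-!
Inner automorphisms satisfy `φ ∘ conj_x = conj_{φ x} ∘ φ`, so if `h = x g φ(x)⁻¹` then
`conj_h ∘ φ` is the conjugate of `conj_g ∘ φ` by `conj_x`. Hence the minimal displacement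
`inf_y d(y, ρ(conj_g ∘ φ) y)` depends only on the `φ`-twisted conjugacy class of `g`, and it
suffices to make it arbitrarily large (`exists_large_displacement`).

If an isometry `f` of a `δ`-hyperbolic space satisfies `d(x, f² x) ≥ d(x, f x) + 2δ + N` at a
single point `x`, with `N > 0`, then `f` displaces *every* point by at least `N`
(`le_dist_of_local_gap`). Since `d(x, f² x) = 2 d(x, f x) - 2 (f x | f⁻¹ x)_x`, it is enough to
find `f = ρ(conj_g ∘ φ)` with `d(x, f x)` large and `(f x | f⁻¹ x)_x` bounded.

Let `A`, `B` be the independent loxodromic isometries and `T = ρ φ`. Take `f = Aⁿ V⁻¹ T` with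
`V ∈ {Bᵐ, B⁻ᵐ}`, where `m` is fixed and `n → ∞`. Then `f x` is at bounded distance from `Aⁿ x`,
while `f⁻¹ x = T⁻¹ V A⁻ⁿ x` stays close to `T⁻¹ V x` for a long time, by independence. As
`T⁻¹ Bᵐ x` and `T⁻¹ B⁻ᵐ x` point in different directions, `Aⁿ x` can follow at most one of them,
and `V` is chosen to be the other.
-/

/-- The `φ`-twisted conjugacy class of `g`: all `h` of the form `x * g * (φ x)⁻¹`. -/
def twistedConjClass {G : Type*} [Group G] (φ : MulAut G) (g : G) : Set G :=
  {h : G | ∃ x : G, h = x * g * (φ x)⁻¹}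

/-- `G` has property `R∞` if every automorphism has infinitely many twisted
conjugacy classes. -/
def HasPropertyRInfinity (G : Type*) [Group G] : Prop :=
  ∀ φ : MulAut G, (Set.range (twistedConjClass φ)).Infinite

/-- A metric space is geodesic if any two points are joined by an isometrically
parametrized path realizing the distance. -/
def IsGeodesicSpace (X : Type*) [MetricSpace X] : Prop :=
  ∀ x y : X, ∃ f : ℝ → X, f 0 = x ∧ f (dist x y) = y ∧
    ∀ s ∈ Set.Icc (0 : ℝ) (dist x y), ∀ t ∈ Set.Icc (0 : ℝ) (dist x y),
      dist (f s) (f t) = |s - t|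

/-- The Gromov product `(y|z)ₓ = (d(x,y) + d(x,z) - d(y,z)) / 2`. -/
noncomputable def gromovProd {X : Type*} [MetricSpace X] (x y z : X) : ℝ :=
  (dist x y + dist x z - dist y z) / 2

/-- `X` is Gromov-hyperbolic: there is `δ ≥ 0` with
`(x|y)_w ≥ min ((x|z)_w) ((y|z)_w) - δ` for all `w x y z`. -/
def GromovHyperbolicSpace (X : Type*) [MetricSpace X] : Prop :=
  ∃ δ : ℝ, 0 ≤ δ ∧ ∀ w x y z : X,
    min (gromovProd w x z) (gromovProd w y z) - δ ≤ gromovProd w x y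

/-- `g` acts loxodromically under the isometric action `ρ`: for some basepoint `x`
and `c > 0`, `d(x, gⁿ x) ≥ c n` for all `n ≥ 1`. -/
def IsLoxodromic {Γ X : Type*} [Group Γ] [MetricSpace X]
    (ρ : Γ →* (X ≃ᵢ X)) (g : Γ) : Prop :=
  ∃ x : X, ∃ c : ℝ, 0 < c ∧ ∀ n : ℕ, 1 ≤ n → c * n ≤ dist x (ρ (g ^ n) x)

/-- Two loxodromic elements `g, h` are independent: for some basepoint `x` the Gromov
products `(gᵐ x | hⁿ x)ₓ` are uniformly bounded. -/
def AreIndependent {Γ X : Type*} [Group Γ] [MetricSpace X]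
    (ρ : Γ →* (X ≃ᵢ X)) (g h : Γ) : Prop :=
  ∃ x : X, ∃ B : ℝ, 0 ≤ B ∧
    ∀ m n : ℤ, gromovProd x (ρ (g ^ m) x) (ρ (h ^ n) x) ≤ B

/-- A Bestvina–Fujiwara non-elementary action: there are two independent loxodromic
elements. -/
def NonElementaryAction {Γ X : Type*} [Group Γ] [MetricSpace X]
    (ρ : Γ →* (X ≃ᵢ X)) : Prop :=
  ∃ g h : Γ, IsLoxodromic ρ g ∧ IsLoxodromic ρ h ∧ AreIndependent ρ g h

/-- An acylindrical action: for every `ε > 0` there are `R > 0` and `N > 0` such that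
for all `x, y` at distance at least `R`, the set of `g` moving both `x` and `y` by at
most `ε` has at most `N` elements. -/
def AcylindricalAction {Γ X : Type*} [Group Γ] [MetricSpace X]
    (ρ : Γ →* (X ≃ᵢ X)) : Prop :=
  ∀ ε : ℝ, 0 < ε → ∃ R : ℝ, ∃ N : ℕ, 0 < R ∧ 0 < N ∧
    ∀ x y : X, R ≤ dist x y →
      {g : Γ | dist x (ρ g x) ≤ ε ∧ dist y (ρ g y) ≤ ε}.Finite ∧
      {g : Γ | dist x (ρ g x) ≤ ε ∧ dist y (ρ g y) ≤ ε}.ncard ≤ N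

/-- A group is acylindrically hyperbolic if it admits a non-elementary acylindrical
isometric action on a geodesic Gromov-hyperbolic space. -/
def AcylindricallyHyperbolic (Γ : Type*) [Group Γ] : Prop :=
  ∃ (X : Type) (_ : MetricSpace X) (ρ : Γ →* (X ≃ᵢ X)),
    IsGeodesicSpace X ∧ GromovHyperbolicSpace X ∧
    AcylindricalAction ρ ∧ NonElementaryAction ρ

/-! ### Gromov products -/

section GromovProduct

variable {X : Type*} [MetricSpace X]

theorem gromovProd_comm (x y z : X) : gromovProd x y z = gromovProd x z y := by
  unfold gromovProd; rw [dist_comm y z]; ring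

/-- The Gromov product is `1`-Lipschitz in the base point. -/
theorem gromovProd_le_base (x x' y z : X) :
    gromovProd x y z ≤ gromovProd x' y z + dist x x' := by
  unfold gromovProd
  linarith [dist_triangle x x' y, dist_triangle x x' z]

/-- The Gromov product is `1`-Lipschitz in its first argument. -/
theorem gromovProd_le_left (x y y' z : X) :
    gromovProd x y z ≤ gromovProd x y' z + dist y y' := by
  unfold gromovProd
  linarith [dist_triangle x y' y, dist_triangle y' y z, dist_comm y y']

theorem gromovProd_map (f : X ≃ᵢ X) (x y z : X) :
    gromovProd (f x) (f y) (f z) = gromovProd x y z := by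
  simp only [gromovProd, f.isometry.dist_eq]

theorem gromovProd_add_gromovProd (x y z : X) :
    gromovProd z y x + gromovProd x y z = dist x z := by
  unfold gromovProd
  rw [dist_comm z y, dist_comm z x, dist_comm y x]; ring

/-- The four-point form of hyperbolicity. -/
theorem four_point {δ : ℝ}
    (hδ : ∀ w x y z : X, min (gromovProd w x z) (gromovProd w y z) - δ ≤ gromovProd w x y)
    (p q r s : X) :
    dist p r + dist q s ≤ max (dist p q + dist r s) (dist p s + dist q r) + 2 * δ := by
  have h := hδ r q s p
  unfold gromovProd at h
  have hqp := dist_comm q p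
  have hrp := dist_comm r p
  have hrq := dist_comm r q
  have hsp := dist_comm s p
  rcases min_cases ((dist r q + dist r p - dist q p) / 2)
    ((dist r s + dist r p - dist s p) / 2) with ⟨h1, -⟩ | ⟨h1, -⟩ <;>
  rw [h1] at h
  · have := le_max_left (dist p q + dist r s) (dist p s + dist q r)
    linarith
  · have := le_max_right (dist p q + dist r s) (dist p s + dist q r)
    linarith

end GromovProduct

/-! ### Minimal displacement of isometries -/

section Displacement

variable {X : Type*} [MetricSpace X]

theorem dist_pow_le (f : X ≃ᵢ X) (y : X) (k : ℕ) :
    dist y ((f ^ k) y) ≤ k * dist y (f y) := by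
  induction k with
  | zero => simp
  | succ k ih =>
    have h1 : dist (f y) ((f ^ (k + 1)) y) = dist y ((f ^ k) y) := by
      rw [pow_succ', IsometryEquiv.mul_apply, f.isometry.dist_eq]
    have h2 := dist_triangle y (f y) ((f ^ (k + 1)) y)
    push_cast
    linarith

/-- Under the local gap condition at `x` the distances `d(x, fᵏ x)` increase by at least `N` at
each step: apply the four-point inequality to `x`, `f x`, `f² x`, `fᵏ⁺² x`. -/
theorem dist_pow_succ_of_local_gap {δ : ℝ}
    (hδ : ∀ w x y z : X, min (gromovProd w x z) (gromovProd w y z) - δ ≤ gromovProd w x y)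
    (f : X ≃ᵢ X) (x : X) {N : ℝ} (hN : 0 < N)
    (hgap : dist x (f x) + 2 * δ + N ≤ dist x (f (f x))) (hδ0 : 0 ≤ δ) (k : ℕ) :
    dist x ((f ^ (k + 1)) x) + N ≤ dist x ((f ^ (k + 2)) x) := by
  induction k with
  | zero =>
    have h2 : (f ^ 2) x = f (f x) := by rw [pow_two, IsometryEquiv.mul_apply]
    simp only [zero_add, pow_one, h2]
    linarith
  | succ k ih =>
    have e1 : ∀ j : ℕ, dist (f x) ((f ^ (j + 1)) x) = dist x ((f ^ j) x) := fun j => by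
      rw [pow_succ', IsometryEquiv.mul_apply, f.isometry.dist_eq]
    have e2 : dist (f (f x)) ((f ^ (k + 1 + 2)) x) = dist x ((f ^ (k + 1)) x) := by
      rw [show k + 1 + 2 = (k + 2) + 1 by omega, pow_succ', IsometryEquiv.mul_apply,
        f.isometry.dist_eq, e1]
    have h := four_point hδ x (f x) (f (f x)) ((f ^ (k + 1 + 2)) x)
    rw [e2, show k + 1 + 2 = (k + 2) + 1 by omega, e1, f.isometry.dist_eq] at h
    rw [show k + 1 + 1 = k + 2 by omega, show k + 1 + 2 = (k + 2) + 1 by omega]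
    rcases max_cases (dist x (f x) + dist x ((f ^ (k + 1)) x))
      (dist x ((f ^ (k + 2 + 1)) x) + dist x (f x)) with ⟨h1, -⟩ | ⟨h1, -⟩ <;>
    rw [h1] at h <;> linarith

/-- A local gap at one point forces every point to be displaced by at least `N`: by
`dist_pow_succ_of_local_gap` orbits move at linear speed at least `N`, and this speed does not
depend on the starting point. -/
theorem le_dist_of_local_gap {δ : ℝ} (hδ0 : 0 ≤ δ)
    (hδ : ∀ w x y z : X, min (gromovProd w x z) (gromovProd w y z) - δ ≤ gromovProd w x y)
    (f : X ≃ᵢ X) (x : X) {N : ℝ} (hN : 0 < N)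
    (hgap : dist x (f x) + 2 * δ + N ≤ dist x (f (f x))) (y : X) :
    N ≤ dist y (f y) := by
  have hlin : ∀ k : ℕ, k * N ≤ dist x ((f ^ (k + 1)) x) := by
    intro k
    induction k with
    | zero => simp
    | succ k ih =>
      have := dist_pow_succ_of_local_gap hδ f x hN hgap hδ0 k
      push_cast
      rw [show k + 1 + 1 = k + 2 by omega]
      linarith
  by_contra! hlt
  obtain ⟨k, hk⟩ := exists_nat_gt ((2 * dist x y + dist y (f y)) / (N - dist y (f y)))
  rw [div_lt_iff₀ (by linarith)] at hk
  have h1 := hlin k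
  have h2 := dist_pow_le f y (k + 1)
  have h3 := dist_triangle4 x y ((f ^ (k + 1)) y) ((f ^ (k + 1)) x)
  rw [(f ^ (k + 1)).isometry.dist_eq, dist_comm y x] at h3
  push_cast at h2
  linarith

theorem dist_inv_apply (f : X ≃ᵢ X) (x y : X) : dist (f⁻¹ x) y = dist x (f y) := by
  rw [← f.isometry.dist_eq (f⁻¹ x) y, IsometryEquiv.apply_inv_self]

/-- If `U⁻¹ x` and `V⁻¹ x` do not follow each other (`hUV`), `U x` does not follow `T⁻¹ V x`
(`hdir`), and `V` moves `x` far enough compared with these bounds (`hV`), then `f = U V⁻¹ T`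
has `(f x | f⁻¹ x)_x` bounded independently of `U`. -/
theorem gromovProd_inv_le {δ : ℝ}
    (hδ : ∀ w x y z : X, min (gromovProd w x z) (gromovProd w y z) - δ ≤ gromovProd w x y)
    (U V T : X ≃ᵢ X) (x : X) {B₀ K : ℝ}
    (hUV : gromovProd x (U⁻¹ x) (V⁻¹ x) ≤ B₀)
    (hdir : gromovProd x (U x) (T⁻¹ (V x)) ≤ K)
    (hV : K + δ < dist x (V x) - B₀ - dist x (T x)) :
    gromovProd x ((U * V⁻¹ * T) x) ((U * V⁻¹ * T)⁻¹ x) ≤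
      K + δ + dist x (T x) + dist x (V x) := by
  have hinv : (U * V⁻¹ * T)⁻¹ x = T⁻¹ (V (U⁻¹ x)) := by
    simp [mul_inv_rev, IsometryEquiv.mul_apply]
  rw [hinv]
  -- `T⁻¹ V U⁻¹ x` follows `T⁻¹ V x` for almost all of its length.
  have hfollow : dist x (V x) - B₀ - dist x (T x) ≤
      gromovProd x (T⁻¹ (V x)) (T⁻¹ (V (U⁻¹ x))) := by
    have h1 := gromovProd_le_base (T⁻¹ x) x (T⁻¹ (V x)) (T⁻¹ (V (U⁻¹ x)))
    rw [gromovProd_map, dist_inv_apply] at h1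
    have h2 : gromovProd x (V x) (V (U⁻¹ x)) = gromovProd (V⁻¹ x) x (U⁻¹ x) := by
      rw [← gromovProd_map V (V⁻¹ x), IsometryEquiv.apply_inv_self]
    have h3 := gromovProd_add_gromovProd x (U⁻¹ x) (V⁻¹ x)
    rw [dist_comm, dist_inv_apply, gromovProd_comm (V⁻¹ x)] at h3
    linarith
  have h4 := hδ x (U x) (T⁻¹ (V x)) (T⁻¹ (V (U⁻¹ x)))
  have h5 : gromovProd x (U x) (T⁻¹ (V (U⁻¹ x))) ≤ K + δ := by
    rcases min_cases (gromovProd x (U x) (T⁻¹ (V (U⁻¹ x))))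
      (gromovProd x (T⁻¹ (V x)) (T⁻¹ (V (U⁻¹ x)))) with ⟨h, -⟩ | ⟨h, -⟩ <;>
    rw [h] at h4 <;> linarith
  have h6 := gromovProd_le_left x ((U * V⁻¹ * T) x) (U x) (T⁻¹ (V (U⁻¹ x)))
  have h7 : dist ((U * V⁻¹ * T) x) (U x) ≤ dist x (T x) + dist x (V x) := by
    rw [IsometryEquiv.mul_apply, IsometryEquiv.mul_apply, U.isometry.dist_eq, dist_inv_apply]
    linarith [dist_triangle (T x) x (V x), dist_comm (T x) x]
  linarith

/-- For `A`, `B` with unbounded, independent orbits and any isometry `T`, the isometries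
`Aⁿ Bᵏ T` have arbitrarily large minimal displacement. -/
theorem exists_large_displacement {δ : ℝ} (hδ0 : 0 ≤ δ)
    (hδ : ∀ w x y z : X, min (gromovProd w x z) (gromovProd w y z) - δ ≤ gromovProd w x y)
    (A B T : X ≃ᵢ X) (x : X) {B₀ : ℝ}
    (hAB : ∀ m n : ℤ, gromovProd x ((A ^ m) x) ((B ^ n) x) ≤ B₀)
    (hA : ∀ M : ℝ, ∃ n : ℕ, M ≤ dist x ((A ^ n) x))
    (hB : ∀ M : ℝ, ∃ n : ℕ, M ≤ dist x ((B ^ (2 * n)) x)) {N : ℝ} (hN : 0 < N) :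
    ∃ n k : ℤ, ∀ y : X, N ≤ dist y ((A ^ n * B ^ k * T) y) := by
  set C := dist x (T x) with hC
  obtain ⟨m, hm⟩ := hB (2 * (B₀ + 2 * C + 2 * δ) + 1)
  set D := dist x ((B ^ m) x) with hD
  obtain ⟨n, hn⟩ := hA (2 * (2 * D + 2 * C + 2 * δ) + C + D + 2 * δ + N)
  have hD' : dist x ((B ^ m)⁻¹ x) = D := by
    rw [dist_comm, dist_inv_apply]
  -- The Gromov product of `Bᵐ x` and `B⁻ᵐ x`.
  have hprod : gromovProd x ((B ^ m) x) ((B ^ m)⁻¹ x) = D - dist x ((B ^ (2 * m)) x) / 2 := by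
    unfold gromovProd
    rw [hD', dist_comm ((B ^ m) x) ((B ^ m)⁻¹ x), dist_inv_apply, ← hD,
      ← IsometryEquiv.mul_apply, ← pow_add, ← two_mul m]
    ring
  set K := D - dist x ((B ^ (2 * m)) x) / 2 + C + δ with hK
  have hsplit : gromovProd x ((A ^ n) x) (T⁻¹ ((B ^ m) x)) ≤ K ∨
      gromovProd x ((A ^ n) x) (T⁻¹ ((B ^ m)⁻¹ x)) ≤ K := by
    have h1 := hδ x (T⁻¹ ((B ^ m) x)) (T⁻¹ ((B ^ m)⁻¹ x)) ((A ^ n) x)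
    have h2 := gromovProd_le_base x (T⁻¹ x) (T⁻¹ ((B ^ m) x)) (T⁻¹ ((B ^ m)⁻¹ x))
    rw [gromovProd_map, hprod, dist_comm x (T⁻¹ x), dist_inv_apply] at h2
    rw [← min_le_iff, gromovProd_comm x ((A ^ n) x), gromovProd_comm x ((A ^ n) x)]
    linarith
  have key : ∀ V : X ≃ᵢ X, dist x (V x) = D →
      gromovProd x ((A ^ n)⁻¹ x) (V⁻¹ x) ≤ B₀ →
      gromovProd x ((A ^ n) x) (T⁻¹ (V x)) ≤ K →
      ∀ y : X, N ≤ dist y ((A ^ n * V⁻¹ * T) y) := by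
    intro V hVD hV hdir
    have hle := gromovProd_inv_le hδ (A ^ n) V T x hV hdir (by rw [hVD]; linarith)
    rw [hVD] at hle
    set f := A ^ n * V⁻¹ * T with hf
    refine le_dist_of_local_gap hδ0 hδ f x hN ?_
    have h1 : gromovProd x (f x) (f⁻¹ x) = dist x (f x) - dist x (f (f x)) / 2 := by
      unfold gromovProd
      rw [dist_comm (f x), dist_inv_apply, dist_comm x (f⁻¹ x), dist_inv_apply]
      ring
    have h2 : dist (f x) ((A ^ n) x) ≤ C + D := by
      rw [hf, IsometryEquiv.mul_apply, IsometryEquiv.mul_apply, (A ^ n).isometry.dist_eq,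
        dist_inv_apply]
      linarith [dist_triangle (T x) x (V x), dist_comm (T x) x]
    have h3 := dist_triangle x (f x) ((A ^ n) x)
    have h4 : 0 ≤ dist x ((B ^ (2 * m)) x) := dist_nonneg
    linarith
  rcases hsplit with h | h
  · refine ⟨n, -m, ?_⟩
    have := key (B ^ m) rfl (by simpa using hAB (-n) (-m)) h
    simpa using this
  · refine ⟨n, m, ?_⟩
    have := key ((B ^ m)⁻¹) hD' (by simpa using hAB (-n) m) h
    simpa using this

end Displacement

/-! ### Twisted conjugacy classes -/

/-- Loxodromicity, stated at one base point, makes the orbits of all points tend to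
infinity. -/
theorem IsLoxodromic.exists_le_dist {Γ X : Type*} [Group Γ] [MetricSpace X]
    {ρ : Γ →* (X ≃ᵢ X)} {g : Γ} (hg : IsLoxodromic ρ g) (x : X) (M : ℝ) :
    ∃ n₀ : ℕ, ∀ n : ℕ, n₀ ≤ n → M ≤ dist x ((ρ g ^ n) x) := by
  obtain ⟨y, c, hc, h⟩ := hg
  obtain ⟨n₀, hn₀⟩ := exists_nat_gt ((M + 2 * dist x y) / c)
  rw [div_lt_iff₀ hc] at hn₀
  refine ⟨n₀ + 1, fun n hn => ?_⟩
  have h1 := h n (by omega)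
  rw [map_pow] at h1
  have h2 := dist_triangle4 y x ((ρ g ^ n) x) ((ρ g ^ n) y)
  rw [(ρ g ^ n).isometry.dist_eq, dist_comm y x] at h2
  have h3 : (n₀ : ℝ) * c ≤ c * n := by
    rw [mul_comm]
    exact mul_le_mul_of_nonneg_left (by exact_mod_cast (by omega : n₀ ≤ n)) hc.le
  linarith

/-- Twisted conjugation of `g` is ordinary conjugation of `conj_g ∘ φ`. -/
theorem conj_twisted {G : Type*} [Group G] (φ : MulAut G) (x g : G) :
    MulAut.conj (x * g * (φ x)⁻¹) * φ =
      MulAut.conj x * (MulAut.conj g * φ) * (MulAut.conj x)⁻¹ := by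
  ext y
  simp [MulAut.mul_apply, mul_assoc]

/-- If `Aut G` acts by isometries on a geodesic Gromov-hyperbolic space in such a way
that the restriction of the action to `Inn G` is non-elementary in the sense of
Bestvina–Fujiwara (i.e. two inner automorphisms act as independent loxodromic
isometries), then `G` has property `R∞`. -/
theorem hasPropertyRInfinity_of_nonelementary_inn_action
    {G : Type*} [Group G] (X : Type*) [MetricSpace X]
    (hgeo : IsGeodesicSpace X) (hhyp : GromovHyperbolicSpace X)
    (ρ : MulAut G →* (X ≃ᵢ X))
    (hne : ∃ g h : G,
      IsLoxodromic ρ (MulAut.conj g) ∧ IsLoxodromic ρ (MulAut.conj h) ∧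
      AreIndependent ρ (MulAut.conj g) (MulAut.conj h)) :
    HasPropertyRInfinity G := by
  obtain ⟨a, b, ha, hb, x, B₀, -, hab⟩ := hne
  obtain ⟨δ, hδ0, hδ⟩ := hhyp
  intro φ hfin
  -- The displacement at `x` of one chosen representative of each of the finitely many classes
  -- is bounded.
  obtain ⟨M, hM⟩ := (hfin.image fun c =>
    dist x (ρ (MulAut.conj (Function.invFun (twistedConjClass φ) c) * φ) x)).bddAbove
  obtain ⟨n, k, hnk⟩ := exists_large_displacement hδ0 hδ (ρ (MulAut.conj a))
    (ρ (MulAut.conj b)) (ρ φ) x (B₀ := B₀)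
    (fun m n => by simpa only [map_zpow] using hab m n)
    (fun M => by
      obtain ⟨n₀, h⟩ := ha.exists_le_dist x M
      exact ⟨n₀, h n₀ le_rfl⟩)
    (fun M => by
      obtain ⟨n₀, h⟩ := hb.exists_le_dist x M
      exact ⟨n₀, h (2 * n₀) (by omega)⟩)
    (N := max M 0 + 1) (by positivity)
  set g : G := a ^ n * b ^ k with hg
  set g' : G := Function.invFun (twistedConjClass φ) (twistedConjClass φ g) with hg'
  have hclass : twistedConjClass φ g' = twistedConjClass φ g :=
    Function.invFun_eq ⟨g, rfl⟩
  have hmem : g ∈ twistedConjClass φ g' := by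
    rw [hclass]
    exact ⟨1, by simp⟩
  obtain ⟨z, hz⟩ := hmem
  have hbound : dist x (ρ (MulAut.conj g' * φ) x) ≤ M :=
    hM ⟨twistedConjClass φ g, ⟨g, rfl⟩, rfl⟩
  have hlarge := hnk (ρ (MulAut.conj z) x)
  have hρ : ρ (MulAut.conj a) ^ n * ρ (MulAut.conj b) ^ k * ρ φ =
      ρ (MulAut.conj z) * ρ (MulAut.conj g' * φ) * (ρ (MulAut.conj z))⁻¹ := by
    rw [← map_inv, ← map_mul ρ (MulAut.conj z), ← map_mul, ← conj_twisted, ← hz, hg]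
    simp only [map_mul, map_zpow]
  rw [hρ, IsometryEquiv.mul_apply, IsometryEquiv.inv_apply_self, IsometryEquiv.mul_apply,
    (ρ (MulAut.conj z)).isometry.dist_eq] at hlarge
  linarith [le_max_left M 0]
end

section
/- For all m, n ∈ ℤ ∖ {0}, the Baumslag–Solitar group BS(m,n) is not virtually cyclic: it contains no cyclic subgroup of finite index. -/
/-!
The group `BS(m,n)` has two easily computed homomorphisms: the `s`-exponent sum
`BS(m,n) → ℤ` (`exponentHom`), which kills `t` and sends `s` to `1`, and the affine action on `ℚ`
(`affineHom`), where `t` is `x ↦ x + 1` and `s` is `x ↦ (n/m) x`. The latter shows that `t` has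
infinite order.

If a cyclic subgroup `⟨h⟩` had finite index, then `t ^ a = h ^ k` and `s ^ b = h ^ l` for some
`a, b > 0`, so `(t ^ a) ^ l = (s ^ b) ^ k`. Exponent sums give `0 = b * k`, so `k = 0` and
`t ^ a = 1`, contradicting the infinite order of `t`.
-/

/-- The single relation `s tᵐ s⁻¹ = tⁿ` defining the Baumslag–Solitar group, where
`s = FreeGroup.of 0` and `t = FreeGroup.of 1`. -/
def bsRels (m n : ℤ) : Set (FreeGroup (Fin 2)) :=
  { FreeGroup.of 0 * FreeGroup.of 1 ^ m * (FreeGroup.of 0)⁻¹ *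
      (FreeGroup.of 1 ^ n)⁻¹ }

/-- The Baumslag–Solitar group `BS(m,n) = ⟨s, t ∣ s tᵐ s⁻¹ = tⁿ⟩`. -/
abbrev BaumslagSolitar (m n : ℤ) : Type := PresentedGroup (bsRels m n)

/-- A group is virtually cyclic if it has a cyclic subgroup of finite index. -/
def VirtuallyCyclic (G : Type*) [Group G] : Prop :=
  ∃ H : Subgroup G, H.FiniteIndex ∧ IsCyclic H

/-- The `s`-exponent sum on `BS(m,n)`. -/
def exponentHom (m n : ℤ) : BaumslagSolitar m n →* Multiplicative ℤ :=
  PresentedGroup.toGroup (f := ![Multiplicative.ofAdd 1, 1]) (by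
    rintro r rfl
    simp)

/-- The action of `BS(m,n)` on `ℚ` by affine maps: `s` acts by `x ↦ (n/m) x` and `t` by
`x ↦ x + 1`. -/
def affineHom (m n : ℤ) (hm : m ≠ 0) (hn : n ≠ 0) : BaumslagSolitar m n →* Equiv.Perm ℚ :=
  PresentedGroup.toGroup
    (f := ![Equiv.mulLeft₀ ((n : ℚ) / m) (by positivity), Equiv.addRight 1]) (by
    have hm' : (m : ℚ) ≠ 0 := by exact_mod_cast hm
    have hn' : (n : ℚ) ≠ 0 := by exact_mod_cast hn
    rintro r rfl
    simp only [map_mul, map_inv, map_zpow, FreeGroup.lift_apply_of,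
      mul_inv_eq_iff_eq_mul]
    ext x
    simp [Equiv.Perm.mul_apply]
    field_simp)

/-- `t` has infinite order, as it acts on `ℚ` by a nontrivial translation. -/
theorem t_pow_ne_one (m n : ℤ) (hm : m ≠ 0) (hn : n ≠ 0) (a : ℕ) (ha : a ≠ 0) :
    (PresentedGroup.of 1 : BaumslagSolitar m n) ^ a ≠ 1 := by
  intro h
  have h' := congrArg (fun g => affineHom m n hm hn g 0) h
  simp [affineHom] at h'
  exact ha h'

/-- For all nonzero `m, n`, the Baumslag–Solitar group `BS(m,n)` is not virtually
cyclic. -/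
theorem baumslagSolitar_not_virtuallyCyclic (m n : ℤ) (hm : m ≠ 0) (hn : n ≠ 0) :
    ¬ VirtuallyCyclic (BaumslagSolitar m n) := by
  rintro ⟨H, hH, hc⟩
  obtain ⟨a, ha, -, hta⟩ := Subgroup.exists_pow_mem_of_index_ne_zero hH.index_ne_zero
    (PresentedGroup.of 1 : BaumslagSolitar m n)
  obtain ⟨b, hb, -, hsb⟩ := Subgroup.exists_pow_mem_of_index_ne_zero hH.index_ne_zero
    (PresentedGroup.of 0 : BaumslagSolitar m n)
  obtain ⟨h, rfl⟩ := H.isCyclic_iff_exists_zpowers_eq_top.mp hc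
  obtain ⟨k, hk⟩ := Subgroup.mem_zpowers_iff.mp hta
  obtain ⟨l, hl⟩ := Subgroup.mem_zpowers_iff.mp hsb
  have key : ((PresentedGroup.of 1 : BaumslagSolitar m n) ^ a) ^ l =
      ((PresentedGroup.of 0 : BaumslagSolitar m n) ^ b) ^ k := by
    rw [← hk, ← hl, ← zpow_mul, ← zpow_mul, mul_comm]
  have hσ := congrArg (fun g => (exponentHom m n g).toAdd) key
  have hk0 : k = 0 := by
    simp [exponentHom] at hσ
    omega
  rw [hk0, zpow_zero] at hk
  exact t_pow_ne_one m n hm hn a ha.ne' hk.symm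
end

section
/- Let n ≥ 4 and let σ = ((m_1,n_1),…,(m_n,n_n)) be a tuple with m_i, n_i ∈ ℤ ∖ {0} and |m_i| ≠ |n_i| for all i. Then the generalized Higman group H_σ is not isomorphic to any Baumslag–Solitar group BS(m,n) with m, n ∈ ℤ ∖ {0} and m ≠ n. -/
/-!
The two groups are told apart by their homomorphisms to `ℤ`. A Baumslag–Solitar group maps onto `ℤ`
by recording the exponent sum of the stable letter (`bsToInt`). In a generalized Higman group every
generator is torsion in the abelianization, because `mᵢ ≠ kᵢ`, so every homomorphism to `ℤ` is
trivial (`higman_hom_int_eq_one`).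
-/

/-- The relations `aᵢ aᵢ₊₁^(m i) aᵢ⁻¹ = aᵢ₊₁^(k i)` (for `i ∈ ℤ/nℤ`) defining a
generalized Higman group. -/
def higmanRels (n : ℕ) (m k : ZMod n → ℤ) : Set (FreeGroup (ZMod n)) :=
  Set.range fun i : ZMod n =>
    FreeGroup.of i * FreeGroup.of (i + 1) ^ m i * (FreeGroup.of i)⁻¹ *
      (FreeGroup.of (i + 1) ^ k i)⁻¹

/-- The generalized Higman group `H_σ` for `σ = ((m 0, k 0), …, (m (n-1), k (n-1)))`:
`⟨a₁,…,aₙ ∣ aᵢ aᵢ₊₁^(mᵢ) aᵢ⁻¹ = aᵢ₊₁^(kᵢ), i ∈ ℤ/nℤ⟩`. -/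
abbrev GeneralizedHigmanGroup (n : ℕ) (m k : ZMod n → ℤ) : Type :=
  PresentedGroup (higmanRels n m k)

/-- Martin's 4-generated Higman-like group
`H(mᵢ) = ⟨a₁,…,a₄ ∣ aᵢ aᵢ₊₁ aᵢ⁻¹ = aᵢ₊₁^(mᵢ), i ∈ ℤ/4ℤ⟩`,
i.e. `H_σ` for `σ = ((1,m₁),(1,m₂),(1,m₃),(1,m₄))`. -/
abbrev MartinHigmanLikeGroup (m : ZMod 4 → ℤ) : Type :=
  GeneralizedHigmanGroup 4 (fun _ => 1) m

/-- The classical Higman group `Hₙ = ⟨a₁,…,aₙ ∣ aᵢ aᵢ₊₁ aᵢ⁻¹ = aᵢ₊₁², i ∈ ℤ/nℤ⟩`. -/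
abbrev ClassicalHigmanGroup (n : ℕ) : Type :=
  GeneralizedHigmanGroup n (fun _ => 1) (fun _ => 2)

/-- `H_σ` has no nontrivial homomorphism to `ℤ`: the `i`-th relation gives
`(m i - k i) • f (a_{i+1}) = 0` in `ℤ`, and `m i ≠ k i`. -/
theorem higman_hom_int_eq_one (n : ℕ) (m k : ZMod n → ℤ)
    (hmk : ∀ i, (m i).natAbs ≠ (k i).natAbs)
    (f : GeneralizedHigmanGroup n m k →* Multiplicative ℤ) : f = 1 := by
  refine PresentedGroup.ext fun j => ?_
  obtain ⟨i, rfl⟩ : ∃ i, i + 1 = j := ⟨j - 1, sub_add_cancel j 1⟩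
  have hrel := congrArg f (PresentedGroup.one_of_mem (rels := higmanRels n m k) ⟨i, rfl⟩)
  simp only [map_mul, map_inv, map_zpow, map_one, mul_inv_cancel_comm] at hrel
  have h := congrArg Multiplicative.toAdd (mul_inv_eq_one.mp hrel)
  simp only [toAdd_zpow, smul_eq_mul] at h
  have hne : m i ≠ k i := fun e => hmk i (congrArg Int.natAbs e)
  refine Multiplicative.toAdd.injective ?_
  by_contra h0
  exact hne (mul_right_cancel₀ h0 h)

/-- The projection `BS(p,q) → ℤ` with `s ↦ 1` and `t ↦ 0`. -/
def bsToInt (p q : ℤ) : BaumslagSolitar p q →* Multiplicative ℤ :=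
  PresentedGroup.toGroup (f := ![Multiplicative.ofAdd 1, 1]) (by
    rintro r rfl
    simp)

theorem bsToInt_of_zero (p q : ℤ) :
    bsToInt p q (PresentedGroup.of 0) = Multiplicative.ofAdd 1 := by
  simp [bsToInt]

/-- For `n ≥ 4`, the generalized Higman group `H_σ` is not isomorphic to any
Baumslag–Solitar group `BS(p,q)` with `p, q` nonzero and `p ≠ q`. -/
theorem generalizedHigman_not_isomorphic_baumslagSolitar (n : ℕ) (hn : 4 ≤ n)
    (m k : ZMod n → ℤ) (hm : ∀ i, m i ≠ 0) (hk : ∀ i, k i ≠ 0)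
    (hmk : ∀ i, (m i).natAbs ≠ (k i).natAbs)
    (p q : ℤ) (hp : p ≠ 0) (hq : q ≠ 0) (hpq : p ≠ q) :
    IsEmpty (GeneralizedHigmanGroup n m k ≃* BaumslagSolitar p q) := by
  refine ⟨fun e => ?_⟩
  have h := higman_hom_int_eq_one n m k hmk ((bsToInt p q).comp e.toMonoidHom)
  have h1 := DFunLike.congr_fun h (e.symm (PresentedGroup.of 0))
  simp only [MonoidHom.comp_apply, MulEquiv.coe_toMonoidHom, MulEquiv.apply_symm_apply,
    bsToInt_of_zero, MonoidHom.one_apply] at h1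
  exact one_ne_zero (ofAdd_eq_one.mp h1)
end

section
/- Let a = [[1,1],[0,1]] and b = [[2,0],[0,1]] in GL₂(ℝ), and let Γ ≤ GL₂(ℝ) be the subgroup generated by a and b. Then: (i) for all m ∈ ℕ and n ∈ ℤ, b⁻ᵐ aⁿ bᵐ = [[1, n/2ᵐ],[0,1]]; (ii) a matrix of the form [[1, r],[0,1]] with r ∈ ℝ belongs to Γ if and only if r ∈ ℤ[1/2] (the ring of dyadic rationals); (iii) any two elements of Γ of the form [[2, r],[0,1]] and [[2, s],[0,1]] are conjugate by an element of Γ. -/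
/-!
Every element of `Γ = ⟨a, b⟩` is an affine matrix `[[u, r], [0, 1]]` with `u` a unit of `ℤ[1/2]` and
`r ∈ ℤ[1/2]`, since matrices of this shape form a group containing `a` and `b`
(`exists_dyadic_of_mem`). Conversely `b⁻ᵐ aⁿ bᵐ` is the translation `[[1, n/2ᵐ], [0, 1]]`
(`conj_glA_zpow`), so `Γ` contains every dyadic translation. Finally, conjugating `[[2, r], [0, 1]]`
by the translation by `t` gives `[[2, r - t], [0, 1]]`; for `t = r - s`, which is dyadic because `r`
and `s` are, this is `[[2, s], [0, 1]]`.
-/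

/-- The matrix `a = [[1,1],[0,1]]` as an invertible 2×2 real matrix. -/
noncomputable def glA : (Matrix (Fin 2) (Fin 2) ℝ)ˣ :=
  ⟨!![1, 1; 0, 1], !![1, -1; 0, 1],
    by rw [Matrix.mul_fin_two, Matrix.one_fin_two]; norm_num,
    by rw [Matrix.mul_fin_two, Matrix.one_fin_two]; norm_num⟩

/-- The matrix `b = [[2,0],[0,1]]` as an invertible 2×2 real matrix. -/
noncomputable def glB : (Matrix (Fin 2) (Fin 2) ℝ)ˣ :=
  ⟨!![2, 0; 0, 1], !![1/2, 0; 0, 1],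
    by rw [Matrix.mul_fin_two, Matrix.one_fin_two]; norm_num,
    by rw [Matrix.mul_fin_two, Matrix.one_fin_two]; norm_num⟩

/-- Membership in `ℤ[1/2]`, as the explicit existence of a numerator and an exponent. -/
def IsDyadic (r : ℝ) : Prop := ∃ (z : ℤ) (m : ℕ), r = (z : ℝ) / 2 ^ m

lemma IsDyadic.intCast (z : ℤ) : IsDyadic (z : ℝ) := ⟨z, 0, by simp⟩

lemma IsDyadic.neg {r : ℝ} (hr : IsDyadic r) : IsDyadic (-r) := by
  obtain ⟨z, m, rfl⟩ := hr
  exact ⟨-z, m, by push_cast; ring⟩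

lemma IsDyadic.add {r s : ℝ} (hr : IsDyadic r) (hs : IsDyadic s) : IsDyadic (r + s) := by
  obtain ⟨z, m, rfl⟩ := hr
  obtain ⟨w, n, rfl⟩ := hs
  exact ⟨z * 2 ^ n + w * 2 ^ m, m + n, by push_cast; rw [pow_add]; field_simp⟩

lemma IsDyadic.mul {r s : ℝ} (hr : IsDyadic r) (hs : IsDyadic s) : IsDyadic (r * s) := by
  obtain ⟨z, m, rfl⟩ := hr
  obtain ⟨w, n, rfl⟩ := hs
  exact ⟨z * w, m + n, by push_cast; rw [pow_add]; field_simp⟩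

/-- Asking for an explicit dyadic inverse `v` of `u` makes the shape visibly stable under
inversion. -/
lemma exists_dyadic_of_mem {g : (Matrix (Fin 2) (Fin 2) ℝ)ˣ}
    (hg : g ∈ Subgroup.closure {glA, glB}) :
    ∃ u v r : ℝ, IsDyadic u ∧ IsDyadic v ∧ IsDyadic r ∧ u * v = 1 ∧
      (g : Matrix (Fin 2) (Fin 2) ℝ) = !![u, r; 0, 1] := by
  have h0 : IsDyadic 0 := by simpa using IsDyadic.intCast 0
  have h1 : IsDyadic 1 := by simpa using IsDyadic.intCast 1
  have h2 : IsDyadic 2 := by simpa using IsDyadic.intCast 2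
  induction hg using Subgroup.closure_induction with
  | mem x hx =>
    rcases hx with rfl | rfl
    · exact ⟨1, 1, 1, h1, h1, h1, by norm_num, rfl⟩
    · exact ⟨2, 1 / 2, 0, h2, ⟨1, 1, by norm_num⟩, h0, by norm_num, rfl⟩
  | one => exact ⟨1, 1, 0, h1, h1, h0, by norm_num, Matrix.one_fin_two⟩
  | mul x y _ _ ihx ihy =>
    obtain ⟨u, v, r, hu, hv, hr, huv, hx⟩ := ihx
    obtain ⟨u', v', r', hu', hv', hr', huv', hy⟩ := ihy
    refine ⟨u * u', v * v', u * r' + r, hu.mul hu', hv.mul hv', (hu.mul hr').add hr, ?_, ?_⟩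
    · rw [mul_mul_mul_comm, huv, huv', one_mul]
    · rw [Units.val_mul, hx, hy, Matrix.mul_fin_two]
      simp
  | inv x _ ih =>
    obtain ⟨u, v, r, hu, hv, hr, huv, hx⟩ := ih
    refine ⟨v, u, -(v * r), hv, hu, (hv.mul hr).neg, by rw [mul_comm, huv], ?_⟩
    refine Units.inv_eq_of_mul_eq_one_left ?_
    rw [hx, Matrix.mul_fin_two, Matrix.one_fin_two, mul_comm v u, huv]
    simp

/-- The translation matrix `[[1, t], [0, 1]]` as a unit. -/
noncomputable def translation (t : ℝ) : (Matrix (Fin 2) (Fin 2) ℝ)ˣ :=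
  ⟨!![1, t; 0, 1], !![1, -t; 0, 1],
    by rw [Matrix.mul_fin_two, Matrix.one_fin_two]; simp,
    by rw [Matrix.mul_fin_two, Matrix.one_fin_two]; simp⟩

lemma translation_add (s t : ℝ) : translation (s + t) = translation s * translation t := by
  ext1
  simp [translation, add_comm]

lemma glA_zpow (n : ℤ) : glA ^ n = translation n := by
  have hA : glA = translation 1 := by ext1; rfl
  induction n using Int.induction_on with
  | zero => ext1; simp [translation, Matrix.one_fin_two]
  | succ k ih => rw [zpow_add_one, ih, hA, ← translation_add]; push_cast; rfl
  | pred k ih =>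
    rw [zpow_sub_one, ih, hA, mul_inv_eq_iff_eq_mul, ← translation_add]
    push_cast
    rw [sub_add_cancel]

lemma glB_pow (m : ℕ) :
    ((glB ^ m : (Matrix (Fin 2) (Fin 2) ℝ)ˣ) : Matrix (Fin 2) (Fin 2) ℝ) =
      !![2 ^ m, 0; 0, 1] := by
  induction m with
  | zero => simp [Matrix.one_fin_two]
  | succ k ih =>
    rw [pow_succ, Units.val_mul, ih]
    simp [glB, pow_succ]

lemma conj_glA_zpow (m : ℕ) (n : ℤ) :
    (glB ^ m)⁻¹ * glA ^ n * glB ^ m = translation ((n : ℝ) / 2 ^ m) := by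
  rw [mul_assoc, inv_mul_eq_iff_eq_mul, glA_zpow]
  ext1
  rw [Units.val_mul, Units.val_mul, glB_pow]
  simp [translation, mul_div_cancel₀]

lemma translation_mem {t : ℝ} (ht : IsDyadic t) :
    translation t ∈ Subgroup.closure {glA, glB} := by
  obtain ⟨n, m, rfl⟩ := ht
  have hA : glA ∈ Subgroup.closure {glA, glB} := Subgroup.subset_closure (by simp)
  have hB : glB ∈ Subgroup.closure {glA, glB} := Subgroup.subset_closure (by simp)
  rw [← conj_glA_zpow]
  exact mul_mem (mul_mem (inv_mem (pow_mem hB m)) (zpow_mem hA n)) (pow_mem hB m)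

lemma isDyadic_of_mem {g : (Matrix (Fin 2) (Fin 2) ℝ)ˣ} {c r : ℝ}
    (hg : g ∈ Subgroup.closure {glA, glB})
    (h : (g : Matrix (Fin 2) (Fin 2) ℝ) = !![c, r; 0, 1]) : IsDyadic r := by
  obtain ⟨u, v, r', -, -, hr', -, hg'⟩ := exists_dyadic_of_mem hg
  have h01 : r = r' := by simpa using congrFun (congrFun (h.symm.trans hg') 0) 1
  rwa [h01]

/-- In `Γ = ⟨a, b⟩ ≤ GL₂(ℝ)` with `a = [[1,1],[0,1]]` and `b = [[2,0],[0,1]]`: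
(i) `b⁻ᵐ aⁿ bᵐ = [[1, n/2ᵐ],[0,1]]`;
(ii) `[[1,r],[0,1]] ∈ Γ` iff `r` is a dyadic rational;
(iii) any two elements of `Γ` of the form `[[2,r],[0,1]]`, `[[2,s],[0,1]]` are
conjugate in `Γ`. -/
theorem bs_one_two_in_gl2 :
    (∀ (m : ℕ) (n : ℤ),
        (((glB ^ m)⁻¹ * glA ^ n * glB ^ m : (Matrix (Fin 2) (Fin 2) ℝ)ˣ) :
            Matrix (Fin 2) (Fin 2) ℝ) = !![1, (n : ℝ) / 2 ^ m; 0, 1]) ∧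
    (∀ r : ℝ,
        (∃ g ∈ Subgroup.closure {glA, glB},
            ((g : (Matrix (Fin 2) (Fin 2) ℝ)ˣ) : Matrix (Fin 2) (Fin 2) ℝ) =
              !![1, r; 0, 1]) ↔
          ∃ (z : ℤ) (m : ℕ), r = (z : ℝ) / 2 ^ m) ∧
    (∀ g h : (Matrix (Fin 2) (Fin 2) ℝ)ˣ,
        g ∈ Subgroup.closure {glA, glB} → h ∈ Subgroup.closure {glA, glB} →
        ∀ r s : ℝ,
          (g : Matrix (Fin 2) (Fin 2) ℝ) = !![2, r; 0, 1] →
          (h : Matrix (Fin 2) (Fin 2) ℝ) = !![2, s; 0, 1] →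
          ∃ z ∈ Subgroup.closure {glA, glB}, h = z * g * z⁻¹) := by
  refine ⟨fun m n => ?_, fun r => ⟨?_, fun hr => ⟨translation r, translation_mem hr, rfl⟩⟩, ?_⟩
  · rw [conj_glA_zpow]
    rfl
  · rintro ⟨g, hg, h⟩
    exact isDyadic_of_mem hg h
  · intro g h hg hh r s hgr hhs
    have hd : IsDyadic (r - s) := by
      rw [sub_eq_add_neg]
      exact (isDyadic_of_mem hg hgr).add (isDyadic_of_mem hh hhs).neg
    refine ⟨translation (r - s), translation_mem hd, ?_⟩
    rw [eq_mul_inv_iff_mul_eq]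
    ext1
    rw [Units.val_mul, Units.val_mul, hgr, hhs]
    simp only [translation, Matrix.mul_fin_two]
    congr! 3 <;> ring_nf
end

section
/- Let m ∈ ℤ with |m| > 1 and let G = BS(1,m) = ⟨a, b | b a b⁻¹ = aᵐ⟩. Then there exists a surjective group homomorphism χ : G → ℤ with χ(a) = 0 and χ(b) = 1 such that χ ∘ φ = χ for every automorphism φ of G. In particular, G admits a nontrivial Aut(G)-invariant homogeneous quasimorphism. -/
theorem bs_relation (m : ℤ) :
    (PresentedGroup.of 0 * PresentedGroup.of 1 : BaumslagSolitar 1 m) =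
      PresentedGroup.of 1 ^ m * PresentedGroup.of 0 := by
  have h : PresentedGroup.mk (bsRels 1 m) (FreeGroup.of 0 * FreeGroup.of 1 ^ (1 : ℤ) *
      (FreeGroup.of 0)⁻¹ * (FreeGroup.of 1 ^ m)⁻¹) = 1 :=
    PresentedGroup.one_of_mem (Set.mem_singleton _)
  simp only [map_mul, map_inv, map_zpow, zpow_one] at h
  exact mul_inv_eq_iff_eq_mul.mp (mul_inv_eq_one.mp h)

theorem addRight_zpow (u : ℚ) (n : ℤ) :
    (Equiv.addRight u : Equiv.Perm ℚ) ^ n = Equiv.addRight (n * u) := by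
  induction n using Int.induction_on with
  | zero => ext x; simp
  | succ k ih =>
    rw [zpow_add_one, ih]
    ext x
    simp only [Equiv.Perm.mul_apply, Equiv.coe_addRight]
    push_cast
    ring
  | pred k ih =>
    rw [zpow_sub_one, ih, mul_inv_eq_iff_eq_mul]
    ext x
    simp only [Equiv.Perm.mul_apply, Equiv.coe_addRight]
    push_cast
    ring

/-- A pair `s, t` in a group with `s t s⁻¹ = t ^ m` defines a homomorphism from `BS(1,m)`. -/
def bsLift {H : Type*} [Group H] (m : ℤ) (s t : H) (h : s * t * s⁻¹ = t ^ m) :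
    BaumslagSolitar 1 m →* H :=
  PresentedGroup.toGroup (f := ![s, t]) (by
    intro r hr
    rw [Set.mem_singleton_iff.mp hr]
    simp [h])

theorem bsLift_zero {H : Type*} [Group H] (m : ℤ) (s t : H) (h : s * t * s⁻¹ = t ^ m) :
    bsLift m s t h (PresentedGroup.of 0) = s := by
  simp [bsLift]

theorem bsLift_one {H : Type*} [Group H] (m : ℤ) (s t : H) (h : s * t * s⁻¹ = t ^ m) :
    bsLift m s t h (PresentedGroup.of 1) = t := by
  simp [bsLift]

/-- The character `χ`, written multiplicatively: the exponent sum in the stable letter `b`. -/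
def bsChar (m : ℤ) : BaumslagSolitar 1 m →* Multiplicative ℤ :=
  bsLift m (Multiplicative.ofAdd 1) 1 (by simp)

/-- The affine action of `BS(1,m)` on `ℚ`: `b` is multiplication by `m`, `a` is translation
by `1`. -/
def bsAct (m : ℤ) (hm : (m : ℚ) ≠ 0) : BaumslagSolitar 1 m →* Equiv.Perm ℚ :=
  bsLift m (Equiv.mulLeft₀ (m : ℚ) hm) (Equiv.addRight (1 : ℚ)) (by
    rw [mul_inv_eq_iff_eq_mul, addRight_zpow]
    ext x
    simp [mul_add])

section

variable {m : ℤ}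

@[simp] theorem bsChar_zero : bsChar m (PresentedGroup.of 0) = Multiplicative.ofAdd 1 :=
  bsLift_zero ..

@[simp] theorem bsChar_one : bsChar m (PresentedGroup.of 1) = 1 :=
  bsLift_one ..

@[simp] theorem bsAct_zero (hm : (m : ℚ) ≠ 0) :
    bsAct m hm (PresentedGroup.of 0) = Equiv.mulLeft₀ (m : ℚ) hm :=
  bsLift_zero ..

@[simp] theorem bsAct_one (hm : (m : ℚ) ≠ 0) :
    bsAct m hm (PresentedGroup.of 1) = Equiv.addRight (1 : ℚ) :=
  bsLift_one ..

theorem bs_mem_of_generators (S : Subgroup (BaumslagSolitar 1 m))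
    (h0 : PresentedGroup.of 0 ∈ S) (h1 : PresentedGroup.of 1 ∈ S)
    (g : BaumslagSolitar 1 m) : g ∈ S := by
  have h : Subgroup.closure (Set.range PresentedGroup.of) ≤ S := by
    rw [Subgroup.closure_le]
    rintro _ ⟨i, rfl⟩
    fin_cases i
    exacts [h0, h1]
  rw [PresentedGroup.closure_range_of] at h
  exact h trivial

/-- Every `g` acts as an affine map of slope `m ^ χ g`. -/
theorem bsAct_sub (hm : (m : ℚ) ≠ 0) (g : BaumslagSolitar 1 m) (x y : ℚ) :
    bsAct m hm g x - bsAct m hm g y = (m : ℚ) ^ (bsChar m g).toAdd * (x - y) := by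
  let S : Subgroup (BaumslagSolitar 1 m) :=
    { carrier := {g | ∀ x y : ℚ, bsAct m hm g x - bsAct m hm g y =
        (m : ℚ) ^ (bsChar m g).toAdd * (x - y)}
      one_mem' := by intro x y; simp
      mul_mem' := by
        intro g h hg hh x y
        rw [map_mul, map_mul, Equiv.Perm.mul_apply, Equiv.Perm.mul_apply, hg, hh, toAdd_mul,
          zpow_add₀ hm, mul_assoc]
      inv_mem' := by
        intro g hg x y
        have h := hg ((bsAct m hm g)⁻¹ x) ((bsAct m hm g)⁻¹ y)
        rw [← Equiv.Perm.mul_apply, ← Equiv.Perm.mul_apply, mul_inv_cancel, Equiv.Perm.one_apply,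
          Equiv.Perm.one_apply] at h
        rw [map_inv, map_inv, h, toAdd_inv, zpow_neg, inv_mul_cancel_left₀ (zpow_ne_zero _ hm)] }
  refine bs_mem_of_generators S ?_ ?_ g x y
  · intro x y
    simp [mul_sub]
  · intro x y
    simp

theorem bsChar_map_one (hm : m ≠ 1) (φ : MulAut (BaumslagSolitar 1 m)) :
    bsChar m (φ (PresentedGroup.of 1)) = 1 := by
  have h := congrArg (fun g => (bsChar m (φ g)).toAdd) (bs_relation m)
  simp only [map_mul, map_zpow, toAdd_mul, toAdd_zpow, smul_eq_mul] at h
  have h' : (m - 1) * (bsChar m (φ (PresentedGroup.of 1))).toAdd = 0 := by linarith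
  exact toAdd_eq_zero.mp ((mul_eq_zero.mp h').resolve_left (sub_ne_zero.mpr hm))

/-- If `φ a` acted trivially, the whole action would factor through a cyclic group, although
the actions of `a` and `b` do not commute. -/
theorem bsAct_map_one_ne (hm : (m : ℚ) ≠ 0) (hm1 : m ≠ 1)
    (φ : MulAut (BaumslagSolitar 1 m)) :
    bsAct m hm (φ (PresentedGroup.of 1)) ≠ 1 := by
  intro h
  have key : ∀ g, bsAct m hm g ∈
      Subgroup.zpowers (bsAct m hm (φ (PresentedGroup.of 0))) := by
    intro g
    have := bs_mem_of_generators
      ((Subgroup.zpowers (bsAct m hm (φ (PresentedGroup.of 0)))).comap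
        ((bsAct m hm).comp φ.toMonoidHom))
      (Subgroup.mem_zpowers _) (by simp [Subgroup.mem_comap, h]) (φ.symm g)
    simpa using this
  obtain ⟨i, hi⟩ := key (PresentedGroup.of 0)
  obtain ⟨j, hj⟩ := key (PresentedGroup.of 1)
  have hc : bsAct m hm (PresentedGroup.of 0) * bsAct m hm (PresentedGroup.of 1) =
      bsAct m hm (PresentedGroup.of 1) * bsAct m hm (PresentedGroup.of 0) := by
    rw [← hi, ← hj]
    exact zpow_mul_comm _ _ _
  have h0 := congrArg (fun p : Equiv.Perm ℚ => p 0) hc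
  simp at h0
  exact hm1 (by exact_mod_cast h0)

theorem bsChar_map_zero (hm : 1 < |m|) (φ : MulAut (BaumslagSolitar 1 m)) :
    bsChar m (φ (PresentedGroup.of 0)) = Multiplicative.ofAdd 1 := by
  have hm0 : (m : ℚ) ≠ 0 := by
    rintro h
    simp [Int.cast_eq_zero.mp h] at hm
  have hm1 : m ≠ 1 := by
    rintro rfl
    simp at hm
  set u := bsAct m hm0 (φ (PresentedGroup.of 1)) 0 with hu
  have htrans : bsAct m hm0 (φ (PresentedGroup.of 1)) = Equiv.addRight u := by
    ext x
    have := bsAct_sub hm0 (φ (PresentedGroup.of 1)) x 0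
    rw [bsChar_map_one hm1, ← hu] at this
    simp at this
    simp only [Equiv.coe_addRight]
    linarith
  have hu0 : u ≠ 0 := by
    intro h0
    apply bsAct_map_one_ne hm0 hm1 φ
    rw [htrans, h0]
    simp
  have hrel := congrArg (fun g => bsAct m hm0 (φ g) 0) (bs_relation m)
  simp only [map_mul, map_zpow, htrans, addRight_zpow, Equiv.Perm.mul_apply,
    Equiv.coe_addRight, zero_add] at hrel
  have hslope := bsAct_sub hm0 (φ (PresentedGroup.of 0)) u 0
  have hpow : (m : ℚ) ^ (bsChar m (φ (PresentedGroup.of 0))).toAdd = (m : ℚ) ^ (1 : ℤ) := by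
    apply mul_right_cancel₀ hu0
    rw [zpow_one]
    linarith
  -- Comparing absolute values makes `k ↦ |m| ^ k` injective also for negative `m`.
  have habs := congrArg abs hpow
  rw [abs_zpow, abs_zpow] at habs
  have h1 : (1 : ℚ) < |(m : ℚ)| := by exact_mod_cast hm
  exact Multiplicative.toAdd.injective (zpow_right_injective₀ (by linarith) h1.ne' habs)

end

/-- For `|m| > 1` and `G = BS(1,m) = ⟨a, b ∣ b a b⁻¹ = aᵐ⟩` (so `b = s = of 0` and
`a = t = of 1` in our presentation `⟨s, t ∣ s t s⁻¹ = tᵐ⟩`), there is a surjective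
homomorphism `χ : G → ℤ` with `χ(a) = 0`, `χ(b) = 1`, invariant under every
automorphism of `G`. In particular `G` admits a nontrivial `Aut G`-invariant
homogeneous quasimorphism. -/
theorem bs_one_m_invariant_character (m : ℤ) (hm : 1 < |m|) :
    ∃ χ : BaumslagSolitar 1 m → ℤ,
      (∀ x y : BaumslagSolitar 1 m, χ (x * y) = χ x + χ y) ∧
      Function.Surjective χ ∧
      χ (PresentedGroup.of (1 : Fin 2)) = 0 ∧
      χ (PresentedGroup.of (0 : Fin 2)) = 1 ∧
      (∀ φ : MulAut (BaumslagSolitar 1 m),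
        ∀ x : BaumslagSolitar 1 m, χ (φ x) = χ x) := by
  have hm1 : m ≠ 1 := by
    rintro rfl
    simp at hm
  refine ⟨fun g => (bsChar m g).toAdd, fun x y => by simp, fun n =>
    ⟨PresentedGroup.of 0 ^ n, by simp⟩, by simp, by simp, fun φ x => ?_⟩
  have := bs_mem_of_generators (((bsChar m).comp φ.toMonoidHom).eqLocus (bsChar m))
    ((bsChar_map_zero hm φ).trans bsChar_zero.symm)
    ((bsChar_map_one hm1 φ).trans bsChar_one.symm) x
  exact congrArg Multiplicative.toAdd this
end

section
/- Let H be a group with trivial center such that every group homomorphism H → ℤ × ℤ is trivial, and let G = H × ℤ². Then the map Aut(H) × Aut(ℤ²) → Aut(G) sending a pair (α, A) to the product automorphism (h, z) ↦ (α(h), A(z)) is an isomorphism of groups; in other words, Aut(H × ℤ²) ≅ Aut(H) × GL₂(ℤ). -/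
/-! Any automorphism `φ` of `H × A`, with `A` abelian, `Z(H) = 1` and `Hom(H, A) = 1`, preserves
both factors. The homomorphism `h ↦ (φ (h, 1)).2` from `H` to `A` is trivial, so `φ` maps `H × 1`
into itself (`mulAut_prod_apply_left`). The factor `1 × A` lies in the center of `H × A`, which
`φ` preserves; an element of that center has central, hence trivial, first coordinate, so `φ` maps
`1 × A` into itself (`mulAut_prod_apply_right`). The same holds for `φ⁻¹`, so the restrictions of
`φ` to the two factors are automorphisms, and `φ` is their product. Conversely a product
automorphism determines its two components, so the homomorphism from `Aut H × Aut A` to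
`Aut (H × A)` is bijective. -/

theorem mulAut_prod_apply_left {H A : Type*} [Group H] [CommGroup A]
    (hhom : ∀ f : H →* A, f = 1) (φ : MulAut (H × A)) (h : H) :
    φ (h, 1) = ((φ (h, 1)).1, 1) := by
  have key := DFunLike.congr_fun
    (hhom ((MonoidHom.snd H A).comp (φ.toMonoidHom.comp (MonoidHom.inl H A)))) h
  exact Prod.ext rfl key

theorem mulAut_prod_apply_right {H A : Type*} [Group H] [CommGroup A]
    (hz : Subgroup.center H = ⊥) (φ : MulAut (H × A)) (a : A) :
    φ (1, a) = (1, (φ (1, a)).2) := by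
  have hmem : (φ (1, a)).1 ∈ Subgroup.center H := by
    rw [Subgroup.mem_center_iff]
    intro g
    obtain ⟨x, hx⟩ := φ.surjective (g, 1)
    have hcomm : x * (1, a) = (1, a) * x := by
      ext <;> simp [mul_comm]
    have := congrArg (fun y => (φ y).1) hcomm
    simpa [map_mul, hx] using this
  rw [hz, Subgroup.mem_bot] at hmem
  exact Prod.ext hmem rfl

theorem exists_eq_prodCongr {H A : Type*} [Group H] [CommGroup A]
    (hz : Subgroup.center H = ⊥) (hhom : ∀ f : H →* A, f = 1) (φ : MulAut (H × A)) :
    ∃ (α : MulAut H) (β : MulAut A), MulEquiv.prodCongr α β = φ := by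
  have hl := mulAut_prod_apply_left hhom
  have hr := mulAut_prod_apply_right (A := A) hz
  have left_inv : ∀ (ψ : MulAut (H × A)) (h : H), (ψ⁻¹ ((ψ (h, 1)).1, 1)).1 = h := by
    intro ψ h
    rw [← hl, MulAut.inv_apply_self]
  have right_inv : ∀ (ψ : MulAut (H × A)) (a : A), (ψ⁻¹ (1, (ψ (1, a)).2)).2 = a := by
    intro ψ a
    rw [← hr, MulAut.inv_apply_self]
  refine ⟨MonoidHom.toMulEquiv
      ((MonoidHom.fst H A).comp (φ.toMonoidHom.comp (MonoidHom.inl H A)))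
      ((MonoidHom.fst H A).comp ((φ⁻¹).toMonoidHom.comp (MonoidHom.inl H A)))
      (MonoidHom.ext (left_inv φ)) (MonoidHom.ext (left_inv φ⁻¹)),
    MonoidHom.toMulEquiv
      ((MonoidHom.snd H A).comp (φ.toMonoidHom.comp (MonoidHom.inr H A)))
      ((MonoidHom.snd H A).comp ((φ⁻¹).toMonoidHom.comp (MonoidHom.inr H A)))
      (MonoidHom.ext (right_inv φ)) (MonoidHom.ext (right_inv φ⁻¹)), ?_⟩
  refine MulEquiv.ext ?_
  rintro ⟨h, a⟩
  change ((φ (h, 1)).1, (φ (1, a)).2) = φ (h, a)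
  have hsplit : ((h, a) : H × A) = (h, 1) * (1, a) := by simp
  rw [hsplit, map_mul, hl φ h, hr φ a]
  simp

/-- If `H` has trivial center and admits no nontrivial homomorphism to `ℤ × ℤ`, then
`Aut (H × ℤ²) ≅ Aut H × Aut ℤ² (≅ Aut H × GL₂(ℤ))`, via the map sending a pair of
automorphisms to the corresponding product automorphism. -/
theorem aut_of_product_with_zsq (H : Type*) [Group H]
    (hz : Subgroup.center H = ⊥)
    (hhom : ∀ f : H →* Multiplicative (ℤ × ℤ), f = 1) :
    ∃ e : (MulAut H × MulAut (Multiplicative (ℤ × ℤ))) ≃*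
        MulAut (H × Multiplicative (ℤ × ℤ)),
      ∀ p : MulAut H × MulAut (Multiplicative (ℤ × ℤ)),
        (e p : (H × Multiplicative (ℤ × ℤ)) ≃* (H × Multiplicative (ℤ × ℤ))) =
          MulEquiv.prodCongr p.1 p.2 := by
  let f : (MulAut H × MulAut (Multiplicative (ℤ × ℤ))) →*
      MulAut (H × Multiplicative (ℤ × ℤ)) :=
    { toFun := fun p => MulEquiv.prodCongr p.1 p.2
      map_one' := rfl
      map_mul' := fun _ _ => rfl }
  have hf : Function.Bijective f := by
    constructor
    · rintro ⟨α, β⟩ ⟨α', β'⟩ heq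
      refine Prod.ext (MulEquiv.ext fun h => ?_) (MulEquiv.ext fun a => ?_)
      · exact congrArg Prod.fst (DFunLike.congr_fun heq (h, 1))
      · exact congrArg Prod.snd (DFunLike.congr_fun heq (1, a))
    · intro φ
      obtain ⟨α, β, hφ⟩ := exists_eq_prodCongr hz hhom φ
      exact ⟨(α, β), hφ⟩
  exact ⟨MulEquiv.ofBijective f hf, fun _ => rfl⟩
end
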